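/- arXiv:1609.08568 — 2 statements merged into one kernel-verified Lean document; each statement's English description precedes it below -/
import Mathlib

section
/- Fix H ∈ (0, 1/2) and d ∈ (−2H, ∞), and let f_d(ρ) = ∫_{η_d}^{ρ} 2H sinh r/√(sinh² r − (d + 2H cosh r)²) dr. Then lim_{ρ→∞} [ f_d(ρ) − (2H/√(1 − 4H²)) · ( ρ + ln( (1 − 4H²)/√(d² + 1 − 4H²) ) ) ] = 0. -/
open MeasureTheory

/-- Inverse hyperbolic cosine: the inverse of `cosh` restricted to `[1, ∞)`. -/
noncomputable def arcosh (x : ℝ) : ℝ := Real.log (x + Real.sqrt (x ^ 2 - 1))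

/-- The neck parameter `η_d` of the `H`-catenoid `𝒞^H_d`. -/
noncomputable def eta (H d : ℝ) : ℝ :=
  arcosh ((2 * d * H + Real.sqrt (1 - 4 * H ^ 2 + d ^ 2)) / (1 - 4 * H ^ 2))

/-- The height function `λ_d(ρ)` of the generating curve of the `H`-catenoid. -/
noncomputable def lam (H d ρ : ℝ) : ℝ :=
  ∫ r in eta H d..ρ,
    (d + 2 * H * Real.cosh r) /
      Real.sqrt (Real.sinh r ^ 2 - (d + 2 * H * Real.cosh r) ^ 2)

/-- The function `f_d(ρ)`, the part of `λ_d` coming from the `2H sinh r` term. -/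
noncomputable def fF (H d ρ : ℝ) : ℝ :=
  ∫ r in eta H d..ρ,
    2 * H * Real.sinh r /
      Real.sqrt (Real.sinh r ^ 2 - (d + 2 * H * Real.cosh r) ^ 2)

/-!
Put `c = 1 - 4H²`, `s = √(c + d²)` and `u(r) = (c cosh r - 2dH) / s`. Completing the square in
`cosh r` gives `u² - 1 = (c / s²) (sinh² r - (d + 2H cosh r)²)`, and `u(η_d) = 1`. Hence the
integrand of `f_d` is `(2H / √c) u' / √(u² - 1)`, so that `f_d = (2H / √c) arcosh u`. The
asymptotics follow from `arcosh (a cosh ρ - b) - ρ → log a`.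
-/

section Asymptotics

open Filter Topology

theorem tendsto_cosh_atTop : Tendsto Real.cosh atTop atTop := by
  refine tendsto_atTop_mono (fun r => ?_) (Real.tendsto_exp_atTop.atTop_div_const two_pos)
  rw [Real.cosh_eq]
  linarith [Real.exp_pos (-r)]

theorem tendsto_arcosh_sub_log_two_mul :
    Tendsto (fun x : ℝ => Real.arcosh x - Real.log (2 * x)) atTop (𝓝 0) := by
  let g : ℝ → ℝ := fun t => (1 + √(1 - t ^ 2)) / 2
  have hg : Tendsto (fun x : ℝ => Real.log (g x⁻¹)) atTop (𝓝 0) := by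
    have hcont : Continuous g := by fun_prop
    have hlim : Tendsto (fun x : ℝ => g x⁻¹) atTop (𝓝 1) :=
      (hcont.tendsto' 0 1 (by norm_num [g])).comp tendsto_inv_atTop_zero
    simpa only [Real.log_one] using hlim.log one_ne_zero
  refine hg.congr' ?_
  filter_upwards [eventually_gt_atTop 0] with x hx
  have hsqrt : x * √(1 - x⁻¹ ^ 2) = √(x ^ 2 - 1) := by
    rw [← Real.sqrt_sq hx.le, ← Real.sqrt_mul (sq_nonneg x), Real.sqrt_sq hx.le]
    congr 1
    field_simp
  have hfactor : x + √(x ^ 2 - 1) = g x⁻¹ * (2 * x) := by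
    rw [← hsqrt]
    ring
  have hpos : 0 < g x⁻¹ := by positivity
  rw [Real.arcosh, hfactor, Real.log_mul hpos.ne' (by positivity), add_sub_cancel_right]

theorem tendsto_log_mul_cosh_sub_sub {a : ℝ} (ha : 0 < a) (b : ℝ) :
    Tendsto (fun r : ℝ => Real.log (a * Real.cosh r - b) - r) atTop (𝓝 (Real.log (a / 2))) := by
  have hlim : Tendsto (fun r : ℝ => a * ((1 + Real.exp (-r) ^ 2) / 2) - b * Real.exp (-r))
      atTop (𝓝 (a / 2)) := by
    have hcont : Continuous fun t : ℝ => a * ((1 + t ^ 2) / 2) - b * t := by fun_prop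
    exact (hcont.tendsto' 0 (a / 2) (by ring)).comp Real.tendsto_exp_neg_atTop_nhds_zero
  refine (hlim.log (by positivity)).congr' ?_
  filter_upwards [tendsto_cosh_atTop.eventually_gt_atTop (b / a)] with r hr
  have hpos : 0 < a * Real.cosh r - b := sub_pos.2 ((div_lt_iff₀' ha).1 hr)
  have hfactor : a * ((1 + Real.exp (-r) ^ 2) / 2) - b * Real.exp (-r) =
      (a * Real.cosh r - b) * Real.exp (-r) := by
    have hexp : Real.exp r * Real.exp (-r) = 1 := by
      rw [← Real.exp_add, add_neg_cancel, Real.exp_zero]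
    rw [Real.cosh_eq]
    linear_combination (-a / 2) * hexp
  rw [hfactor, Real.log_mul hpos.ne' (Real.exp_ne_zero _), Real.log_exp, ← sub_eq_add_neg]

theorem tendsto_arcosh_mul_cosh_sub_sub {a : ℝ} (ha : 0 < a) (b : ℝ) :
    Tendsto (fun r : ℝ => Real.arcosh (a * Real.cosh r - b) - r) atTop (𝓝 (Real.log a)) := by
  have harg : Tendsto (fun r : ℝ => a * Real.cosh r - b) atTop atTop :=
    tendsto_atTop_add_const_right _ (-b) (tendsto_cosh_atTop.const_mul_atTop ha)
  have hlog := tendsto_log_mul_cosh_sub_sub (mul_pos two_pos ha) (2 * b)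
  rw [mul_div_cancel_left₀ a two_ne_zero] at hlog
  have hsum := (tendsto_arcosh_sub_log_two_mul.comp harg).add hlog
  rw [zero_add] at hsum
  refine hsum.congr fun r => ?_
  rw [Function.comp_apply, mul_sub, mul_assoc]
  ring

end Asymptotics

section ArcoshPrimitive

open Set

theorem integral_deriv_div_sqrt_sq_sub_one {u u' : ℝ → ℝ} {a b : ℝ} (hab : a ≤ b)
    (hu : ContinuousOn u (Icc a b)) (hderiv : ∀ x ∈ Ioo a b, HasDerivAt u (u' x) x)
    (hpos : ∀ x ∈ Ioo a b, 0 < u' x) (hua : 1 ≤ u a) :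
    ∫ x in a..b, u' x / √(u x ^ 2 - 1) = Real.arcosh (u b) - Real.arcosh (u a) := by
  have hmono : StrictMonoOn u (Icc a b) := by
    refine strictMonoOn_of_hasDerivWithinAt_pos (f' := u') (convex_Icc a b) hu ?_ ?_ <;>
      rw [interior_Icc]
    exacts [fun x hx => (hderiv x hx).hasDerivWithinAt, hpos]
  have hmem : a ∈ Icc a b := left_mem_Icc.2 hab
  have hone_le : MapsTo u (Icc a b) (Ici 1) := fun x hx =>
    hua.trans (hmono.monotoneOn hmem hx hx.1)
  have hone_lt : ∀ x ∈ Ioo a b, 1 < u x := fun x hx =>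
    hua.trans_lt (hmono hmem (Ioo_subset_Icc_self hx) hx.1)
  have hcont : ContinuousOn (fun x => Real.arcosh (u x)) (Icc a b) :=
    Real.continuousOn_arcosh.comp hu hone_le
  have hprim : ∀ x ∈ Ioo a b,
      HasDerivAt (fun x => Real.arcosh (u x)) (u' x / √(u x ^ 2 - 1)) x := fun x hx => by
    rw [div_eq_inv_mul]
    exact (Real.hasDerivAt_arcosh (hone_lt x hx)).comp x (hderiv x hx)
  -- The integrand may blow up at `a`; its sign is what makes it integrable.
  have hintegrable : IntervalIntegrable (fun x => u' x / √(u x ^ 2 - 1)) volume a b := by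
    apply intervalIntegral.intervalIntegrable_deriv_of_nonneg
    · rwa [uIcc_of_le hab]
    · rwa [min_eq_left hab, max_eq_right hab]
    · rw [min_eq_left hab, max_eq_right hab]
      exact fun x hx => div_nonneg (hpos x hx).le (Real.sqrt_nonneg _)
  exact intervalIntegral.integral_eq_sub_of_hasDerivAt_of_le hab hcont hprim hintegrable

end ArcoshPrimitive

section Catenoid

variable {H : ℝ}

/-- The normalized substitution variable `u(r) = (c cosh r - 2dH) / s`, where `c = 1 - 4H²` and
`s = √(c + d²)`, in which `f_d` becomes a multiple of `arcosh u`. It is written as an affine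
function of `cosh r`. -/
noncomputable def neckRatio (H d r : ℝ) : ℝ :=
  (1 - 4 * H ^ 2) / √(1 - 4 * H ^ 2 + d ^ 2) * Real.cosh r -
    2 * d * H / √(1 - 4 * H ^ 2 + d ^ 2)

theorem hasDerivAt_neckRatio (H d r : ℝ) :
    HasDerivAt (neckRatio H d)
      ((1 - 4 * H ^ 2) / √(1 - 4 * H ^ 2 + d ^ 2) * Real.sinh r) r :=
  ((Real.hasDerivAt_cosh r).const_mul _).sub_const _

theorem neckRatio_sq_sub_one {d : ℝ} (hs : 0 < 1 - 4 * H ^ 2 + d ^ 2) (r : ℝ) :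
    neckRatio H d r ^ 2 - 1 =
      (1 - 4 * H ^ 2) / (1 - 4 * H ^ 2 + d ^ 2) *
        (Real.sinh r ^ 2 - (d + 2 * H * Real.cosh r) ^ 2) := by
  rw [neckRatio, div_mul_eq_mul_div, ← sub_div, div_pow, Real.sq_sqrt hs.le, Real.sinh_sq]
  field_simp
  ring

theorem arcosh_eq_real_arcosh (x : ℝ) : arcosh x = Real.arcosh x := rfl

theorem one_le_eta_argument (hc : 0 < 1 - 4 * H ^ 2) (d : ℝ) :
    1 ≤ (2 * d * H + √(1 - 4 * H ^ 2 + d ^ 2)) / (1 - 4 * H ^ 2) := by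
  have hsqrt : 1 - 4 * H ^ 2 - 2 * d * H ≤ √(1 - 4 * H ^ 2 + d ^ 2) := by
    apply Real.le_sqrt_of_sq_le
    have hgap : 0 ≤ (1 - 4 * H ^ 2) * (d + 2 * H) ^ 2 := by positivity
    linear_combination hgap
  rw [one_le_div hc]
  linarith

theorem eta_nonneg (hc : 0 < 1 - 4 * H ^ 2) (d : ℝ) : 0 ≤ eta H d := by
  rw [eta, arcosh_eq_real_arcosh]
  exact Real.arcosh_nonneg (one_le_eta_argument hc d)

theorem cosh_eta (hc : 0 < 1 - 4 * H ^ 2) (d : ℝ) :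
    Real.cosh (eta H d) =
      (2 * d * H + √(1 - 4 * H ^ 2 + d ^ 2)) / (1 - 4 * H ^ 2) := by
  rw [eta, arcosh_eq_real_arcosh, Real.cosh_arcosh (one_le_eta_argument hc d)]

theorem neckRatio_eta (hc : 0 < 1 - 4 * H ^ 2) (d : ℝ) : neckRatio H d (eta H d) = 1 := by
  rw [neckRatio, cosh_eta hc]
  field_simp
  ring

theorem fF_integrand_eq (hc : 0 < 1 - 4 * H ^ 2) (d r : ℝ) :
    2 * H * Real.sinh r / √(Real.sinh r ^ 2 - (d + 2 * H * Real.cosh r) ^ 2) =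
      2 * H / √(1 - 4 * H ^ 2) *
        ((1 - 4 * H ^ 2) / √(1 - 4 * H ^ 2 + d ^ 2) * Real.sinh r /
          √(neckRatio H d r ^ 2 - 1)) := by
  rw [neckRatio_sq_sub_one (by positivity), Real.sqrt_mul (by positivity), Real.sqrt_div hc.le]
  generalize 1 - 4 * H ^ 2 = c at hc ⊢
  have hs : √(c + d ^ 2) ≠ 0 := by positivity
  have hsq : √c ^ 2 = c := Real.sq_sqrt hc.le
  field_simp
  rw [hsq]

theorem fF_eq_arcosh_neckRatio (hc : 0 < 1 - 4 * H ^ 2) {d ρ : ℝ} (hρ : eta H d ≤ ρ) :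
    fF H d ρ = 2 * H / √(1 - 4 * H ^ 2) * Real.arcosh (neckRatio H d ρ) := by
  have hcont : ContinuousOn (neckRatio H d) (Set.Icc (eta H d) ρ) := fun r _ =>
    (hasDerivAt_neckRatio H d r).continuousAt.continuousWithinAt
  have hpos : ∀ r ∈ Set.Ioo (eta H d) ρ,
      0 < (1 - 4 * H ^ 2) / √(1 - 4 * H ^ 2 + d ^ 2) * Real.sinh r := fun r hr => by
    have hsinh : 0 < Real.sinh r := Real.sinh_pos_iff.2 ((eta_nonneg hc d).trans_lt hr.1)
    positivity
  have hintegral := integral_deriv_div_sqrt_sq_sub_one hρ hcont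
    (fun r _ => hasDerivAt_neckRatio H d r) hpos (neckRatio_eta hc d).ge
  rw [neckRatio_eta hc, Real.arcosh_zero, sub_zero] at hintegral
  simp only [fF, fF_integrand_eq hc, intervalIntegral.integral_const_mul, hintegral]

end Catenoid

theorem stmt_11_general (H d : ℝ) (hH : |H| < 1 / 2) :
    Filter.Tendsto
      (fun ρ : ℝ =>
        fF H d ρ -
          2 * H / Real.sqrt (1 - 4 * H ^ 2) *
            (ρ + Real.log ((1 - 4 * H ^ 2) / Real.sqrt (d ^ 2 + 1 - 4 * H ^ 2))))
      Filter.atTop (nhds 0) := by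
  have hc : 0 < 1 - 4 * H ^ 2 := by
    linarith [sq_lt_sq' (neg_lt_of_abs_lt hH) (lt_of_abs_lt hH)]
  have hs : 0 < √(1 - 4 * H ^ 2 + d ^ 2) := by positivity
  have hlim := (tendsto_arcosh_mul_cosh_sub_sub (div_pos hc hs)
    (2 * d * H / √(1 - 4 * H ^ 2 + d ^ 2))).sub_const
      (Real.log ((1 - 4 * H ^ 2) / √(1 - 4 * H ^ 2 + d ^ 2)))
  rw [sub_self] at hlim
  have hscaled := hlim.const_mul (2 * H / √(1 - 4 * H ^ 2))
  rw [mul_zero] at hscaled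
  refine hscaled.congr' ?_
  filter_upwards [Filter.eventually_ge_atTop (eta H d)] with ρ hρ
  rw [fF_eq_arcosh_neckRatio hc hρ, neckRatio, add_sub_assoc (d ^ 2), add_comm (d ^ 2)]
  ring

theorem stmt_11 (H d : ℝ) (hH0 : 0 < H) (hH : H < 1 / 2) (hd : -2 * H < d) :
    Filter.Tendsto
      (fun ρ : ℝ =>
        fF H d ρ -
          2 * H / Real.sqrt (1 - 4 * H ^ 2) *
            (ρ + Real.log ((1 - 4 * H ^ 2) / Real.sqrt (d ^ 2 + 1 - 4 * H ^ 2))))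
      Filter.atTop (nhds 0) :=
  stmt_11_general H d (abs_lt.2 ⟨by linarith, hH⟩)
end

section
/- Fix H ∈ (0, 1/2). For every d > 2 and every ρ ∈ (η_d, ∞), J_d(ρ) := ∫_{η_d}^{ρ} (d + 2H e^{−r})/√(sinh² r − (d + 2H cosh r)²) dr < 2π√(1 − 2H). In particular sup over d ∈ (2, ∞) and ρ ∈ (η_d, ∞) of J_d(ρ) is at most 2π√(1 − 2H). -/
open MeasureTheory

/-- The remainder integral `J_d(ρ)` in the decomposition `λ_d = f_d + J_d`. -/
noncomputable def JF (H d ρ : ℝ) : ℝ :=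
  ∫ r in eta H d..ρ,
    (d + 2 * H * Real.exp (-r)) /
      Real.sqrt (Real.sinh r ^ 2 - (d + 2 * H * Real.cosh r) ^ 2)

/-!
Let `w r = (d + 2H cosh r) / sinh r`. Since
`2H + d cosh r = (d + 2H e^{-r}) sinh r + e^{-r} (d + 2H cosh r)`, the derivative of `arccos ∘ w`
dominates the integrand of `J_d`, so `J_d(ρ) ≤ arccos (w ρ)`. Moreover `w ρ ≥ 2H` exactly as long as
the numerator `d + 2H e^{-ρ}` is nonnegative; beyond its zero the integral only decreases. Hence
`J_d ≤ arccos (2H)`, and Jordan's inequality gives `arccos x ≤ π √((1 - x) / 2)`.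
-/

open Real (cosh sinh exp arccos)
open Set (Icc Ioo Ioi)

theorem intervalIntegrable_of_nonneg_of_le_deriv {f g g' : ℝ → ℝ} {a b : ℝ} (hab : a ≤ b)
    (hf : AEStronglyMeasurable f) (hg : ContinuousOn g (Icc a b))
    (hg' : ∀ x ∈ Ioo a b, HasDerivAt g (g' x) x) (hf0 : ∀ x ∈ Ioo a b, 0 ≤ f x)
    (hfg : ∀ x ∈ Ioo a b, f x ≤ g' x) : IntervalIntegrable f volume a b := by
  have hg'int : IntegrableOn g' (Ioo a b) :=
    (intervalIntegral.integrableOn_deriv_of_nonneg hg hg'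
      fun x hx ↦ (hf0 x hx).trans (hfg x hx)).mono_set Set.Ioo_subset_Ioc_self
  rw [intervalIntegrable_iff_integrableOn_Ioo_of_le hab]
  refine hg'int.mono' hf.restrict ((ae_restrict_iff' measurableSet_Ioo).2 (ae_of_all _ ?_))
  intro x hx
  rw [Real.norm_of_nonneg (hf0 x hx)]
  exact hfg x hx

theorem arccos_le_pi_mul_sqrt (x : ℝ) : arccos x ≤ Real.pi * √((1 - x) / 2) := by
  rcases le_total 1 x with hx | hx
  · rw [Real.arccos_of_one_le hx]
    positivity
  have jordan : 2 / Real.pi * (arccos x / 2) ≤ Real.sin (arccos x / 2) :=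
    Real.mul_le_sin (by linarith [Real.arccos_nonneg x]) (by linarith [Real.arccos_le_pi x])
  have le_cos : x ≤ Real.cos (arccos x) := by
    rcases le_total (-1) x with hx' | hx'
    · exact (Real.cos_arccos hx' hx).ge
    · exact hx'.trans (Real.neg_one_le_cos _)
  calc arccos x = Real.pi * (2 / Real.pi * (arccos x / 2)) := by field_simp
    _ ≤ Real.pi * Real.sin (arccos x / 2) := by gcongr
    _ = Real.pi * √((1 - Real.cos (arccos x)) / 2) := by
      rw [Real.sin_half_eq_sqrt (Real.arccos_nonneg x)
        (by linarith [Real.arccos_le_pi x, Real.pi_pos])]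
    _ ≤ Real.pi * √((1 - x) / 2) := by gcongr

theorem arccos_lt_two_mul_pi_mul_sqrt {x : ℝ} (hx : x < 1) :
    arccos x < 2 * Real.pi * √(1 - x) :=
  calc arccos x ≤ Real.pi * √((1 - x) / 2) := arccos_le_pi_mul_sqrt x
    _ ≤ Real.pi * √(1 - x) := by gcongr; linarith
    _ < 2 * Real.pi * √(1 - x) := by
      have : 0 < Real.pi * √(1 - x) := mul_pos Real.pi_pos (Real.sqrt_pos.2 (sub_pos.2 hx))
      linarith

section Catenoid

variable {H d r ρ : ℝ}

/-- The hyperbolic cosine of the neck parameter `η_d`: the larger root of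
`(1 - 4H²) c² - 4dH c - (1 + d²)`, the quadratic that `sinh² r - (d + 2H cosh r)²` becomes in terms
of `c = cosh r`. -/
noncomputable def neckCosh (H d : ℝ) : ℝ :=
  (2 * d * H + √(1 - 4 * H ^ 2 + d ^ 2)) / (1 - 4 * H ^ 2)

theorem eta_eq_arcosh_neckCosh : eta H d = Real.arcosh (neckCosh H d) := rfl

theorem one_lt_neckCosh (hH : 4 * H ^ 2 < 1) (hd : d + 2 * H ≠ 0) : 1 < neckCosh H d := by
  have hq : 0 < 1 - 4 * H ^ 2 := by linarith
  have hgap : 0 < (1 - 4 * H ^ 2) * (d + 2 * H) ^ 2 := by positivity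
  have hroot : 1 - 4 * H ^ 2 - 2 * d * H < √(1 - 4 * H ^ 2 + d ^ 2) :=
    Real.lt_sqrt_of_sq_lt (by linarith)
  rw [neckCosh, lt_div_iff₀ hq]
  linarith

theorem cosh_eta_s14 (hH : 4 * H ^ 2 < 1) (hd : d + 2 * H ≠ 0) : cosh (eta H d) = neckCosh H d := by
  rw [eta_eq_arcosh_neckCosh, Real.cosh_arcosh (one_lt_neckCosh hH hd).le]

theorem eta_pos (hH : 4 * H ^ 2 < 1) (hd : d + 2 * H ≠ 0) : 0 < eta H d := by
  rw [eta_eq_arcosh_neckCosh]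
  exact Real.arcosh_pos (one_lt_neckCosh hH hd)

theorem one_sub_mul_sinh_sq_sub_sq (H d r : ℝ) :
    (1 - 4 * H ^ 2) * (sinh r ^ 2 - (d + 2 * H * cosh r) ^ 2) =
      ((1 - 4 * H ^ 2) * cosh r - 2 * d * H) ^ 2 - (1 - 4 * H ^ 2 + d ^ 2) := by
  rw [Real.sinh_sq]
  ring

theorem one_sub_mul_cosh_eta_sub (hH : 4 * H ^ 2 < 1) (hd : d + 2 * H ≠ 0) :
    (1 - 4 * H ^ 2) * cosh (eta H d) - 2 * d * H = √(1 - 4 * H ^ 2 + d ^ 2) := by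
  rw [cosh_eta_s14 hH hd, neckCosh, mul_div_cancel₀ _ (by linarith)]
  ring

theorem sq_lt_sinh_sq_of_eta_lt (hH : 4 * H ^ 2 < 1) (hd : d + 2 * H ≠ 0) (hr : eta H d < r) :
    (d + 2 * H * cosh r) ^ 2 < sinh r ^ 2 := by
  have hq : 0 < 1 - 4 * H ^ 2 := by linarith
  have hcosh : cosh (eta H d) < cosh r :=
    Real.cosh_strictMonoOn (eta_pos hH hd).le ((eta_pos hH hd).trans hr).le hr
  have hroot : √(1 - 4 * H ^ 2 + d ^ 2) < (1 - 4 * H ^ 2) * cosh r - 2 * d * H := by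
    rw [← one_sub_mul_cosh_eta_sub hH hd]
    gcongr
  have hsq : 1 - 4 * H ^ 2 + d ^ 2 < ((1 - 4 * H ^ 2) * cosh r - 2 * d * H) ^ 2 :=
    Real.lt_sq_of_sqrt_lt hroot
  have hprod := one_sub_mul_sinh_sq_sub_sq H d r
  exact sub_pos.1 (pos_of_mul_pos_right (hprod ▸ sub_pos.2 hsq) hq.le)

theorem add_two_mul_cosh_pos (hH : 0 ≤ H) (hd : -2 * H < d) (r : ℝ) :
    0 < d + 2 * H * cosh r := by
  nlinarith [Real.one_le_cosh r]

theorem sinh_eta (hH0 : 0 ≤ H) (hH : H < 1 / 2) (hd : -2 * H < d) :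
    sinh (eta H d) = d + 2 * H * cosh (eta H d) := by
  have hH' : 4 * H ^ 2 < 1 := by nlinarith
  have hd' : d + 2 * H ≠ 0 := by linarith
  have hprod := one_sub_mul_sinh_sq_sub_sq H d (eta H d)
  rw [one_sub_mul_cosh_eta_sub hH' hd', Real.sq_sqrt (by nlinarith), sub_self] at hprod
  have hsq : sinh (eta H d) ^ 2 = (d + 2 * H * cosh (eta H d)) ^ 2 :=
    sub_eq_zero.1 ((mul_eq_zero.1 hprod).resolve_left (by linarith))
  exact (sq_eq_sq₀ (Real.sinh_nonneg_iff.2 (eta_pos hH' hd').le)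
    (add_two_mul_cosh_pos hH0 hd _).le).1 hsq

/-- The sine of the angle between the profile curve `λ_d` of the catenoid and the horizontal,
that is `λ_d' / √(1 + λ_d'²)` for
`λ_d' r = (d + 2H cosh r) / √(sinh² r - (d + 2H cosh r)²)`. -/
noncomputable def profileSin (H d r : ℝ) : ℝ := (d + 2 * H * cosh r) / sinh r

theorem profileSin_sq_lt_one (hH : 4 * H ^ 2 < 1) (hd : d + 2 * H ≠ 0) (hr : eta H d < r) :
    profileSin H d r ^ 2 < 1 := by
  have hsinh : 0 < sinh r := Real.sinh_pos_iff.2 ((eta_pos hH hd).trans hr)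
  rw [profileSin, div_pow, div_lt_one (by positivity)]
  exact sq_lt_sinh_sq_of_eta_lt hH hd hr

theorem two_mul_le_profileSin_iff (hr : 0 < r) :
    2 * H ≤ profileSin H d r ↔ 0 ≤ d + 2 * H * exp (-r) := by
  rw [profileSin, le_div_iff₀ (Real.sinh_pos_iff.2 hr), ← Real.cosh_sub_sinh, ← sub_nonneg]
  ring_nf

theorem hasDerivAt_profileSin (hr : r ≠ 0) :
    HasDerivAt (profileSin H d) (-(2 * H + d * cosh r) / sinh r ^ 2) r := by
  have hquot := (((Real.hasDerivAt_cosh r).const_mul (2 * H)).const_add d).div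
    (Real.hasDerivAt_sinh r) (Real.sinh_ne_zero.2 hr)
  refine HasDerivAt.congr_deriv (f := profileSin H d) hquot ?_
  congr 1
  linear_combination (-2 * H) * Real.cosh_sq r

theorem sqrt_sinh_sq_sub_sq (hr : 0 < r) :
    √(sinh r ^ 2 - (d + 2 * H * cosh r) ^ 2) = sinh r * √(1 - profileSin H d r ^ 2) := by
  have hsinh : 0 < sinh r := Real.sinh_pos_iff.2 hr
  have hfactor : sinh r ^ 2 - (d + 2 * H * cosh r) ^ 2 =
      sinh r ^ 2 * (1 - profileSin H d r ^ 2) := by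
    rw [profileSin]
    field_simp
  rw [hfactor, Real.sqrt_mul (by positivity), Real.sqrt_sq hsinh.le]

theorem hasDerivAt_arccos_profileSin (hH : 4 * H ^ 2 < 1) (hd : d + 2 * H ≠ 0)
    (hr : eta H d < r) :
    HasDerivAt (fun r ↦ arccos (profileSin H d r))
      ((2 * H + d * cosh r) / sinh r / √(sinh r ^ 2 - (d + 2 * H * cosh r) ^ 2)) r := by
  have hr0 : 0 < r := (eta_pos hH hd).trans hr
  have habs : |profileSin H d r| < 1 :=
    (sq_lt_one_iff_abs_lt_one _).1 (profileSin_sq_lt_one hH hd hr)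
  have hchain := (Real.hasDerivAt_arccos (neg_lt_of_abs_lt habs).ne' (lt_of_abs_lt habs).ne).comp r
    (hasDerivAt_profileSin (H := H) (d := d) hr0.ne')
  refine hchain.congr_deriv ?_
  rw [sqrt_sinh_sq_sub_sq hr0]
  field_simp

theorem continuousOn_arccos_profileSin :
    ContinuousOn (fun r ↦ arccos (profileSin H d r)) (Ioi 0) :=
  Real.continuous_arccos.comp_continuousOn fun _ hr ↦
    (hasDerivAt_profileSin (ne_of_gt hr)).continuousAt.continuousWithinAt

/-- The integrand of the remainder integral `J_d`. -/
noncomputable def remainderDensity (H d r : ℝ) : ℝ :=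
  (d + 2 * H * exp (-r)) / √(sinh r ^ 2 - (d + 2 * H * cosh r) ^ 2)

theorem JF_eq_integral_remainderDensity :
    JF H d ρ = ∫ r in eta H d..ρ, remainderDensity H d r := rfl

theorem measurable_remainderDensity : Measurable (remainderDensity H d) := by
  unfold remainderDensity
  fun_prop

theorem continuousOn_remainderDensity (hH : 4 * H ^ 2 < 1) (hd : d + 2 * H ≠ 0) :
    ContinuousOn (remainderDensity H d) (Ioi (eta H d)) := by
  refine ContinuousOn.div (by fun_prop) (by fun_prop) fun r hr ↦ ?_
  exact (Real.sqrt_pos.2 (sub_pos.2 (sq_lt_sinh_sq_of_eta_lt hH hd hr))).ne'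

theorem antitone_add_two_mul_exp_neg (hH : 0 ≤ H) (d : ℝ) :
    Antitone fun r ↦ d + 2 * H * exp (-r) := by
  intro r s hrs
  dsimp only
  gcongr

theorem add_two_mul_exp_neg_mul_sinh_le (hH : 0 ≤ H) (hd : -2 * H < d) (r : ℝ) :
    (d + 2 * H * exp (-r)) * sinh r ≤ 2 * H + d * cosh r := by
  have hdiff : 2 * H + d * cosh r - (d + 2 * H * exp (-r)) * sinh r =
      exp (-r) * (d + 2 * H * cosh r) := by
    rw [← Real.cosh_sub_sinh]
    linear_combination (-2 * H) * Real.cosh_sq r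
  have hpos := mul_pos (Real.exp_pos (-r)) (add_two_mul_cosh_pos hH hd r)
  linarith

theorem remainderDensity_le_deriv (hH : 0 ≤ H) (hd : -2 * H < d) (hr : 0 < r) :
    remainderDensity H d r ≤
      (2 * H + d * cosh r) / sinh r / √(sinh r ^ 2 - (d + 2 * H * cosh r) ^ 2) := by
  rw [remainderDensity]
  gcongr
  exact (le_div_iff₀ (Real.sinh_pos_iff.2 hr)).2 (add_two_mul_exp_neg_mul_sinh_le hH hd r)

theorem intervalIntegrable_remainderDensity (hH0 : 0 ≤ H) (hH : H < 1 / 2) (hd : -2 * H < d)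
    (hρ : eta H d ≤ ρ) (hnum : 0 ≤ d + 2 * H * exp (-ρ)) :
    IntervalIntegrable (remainderDensity H d) volume (eta H d) ρ := by
  have hH' : 4 * H ^ 2 < 1 := by nlinarith
  have hd' : d + 2 * H ≠ 0 := by linarith
  have hη : 0 < eta H d := eta_pos hH' hd'
  refine intervalIntegrable_of_nonneg_of_le_deriv hρ
    measurable_remainderDensity.aestronglyMeasurable
    (continuousOn_arccos_profileSin.mono fun r hr ↦ hη.trans_le hr.1)
    (fun r hr ↦ hasDerivAt_arccos_profileSin hH' hd' hr.1) (fun r hr ↦ ?_)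
    (fun r hr ↦ remainderDensity_le_deriv hH0 hd (hη.trans hr.1))
  exact div_nonneg (hnum.trans (antitone_add_two_mul_exp_neg hH0 d hr.2.le)) (Real.sqrt_nonneg _)

theorem JF_le_arccos_of_numerator_nonneg (hH0 : 0 ≤ H) (hH : H < 1 / 2) (hd : -2 * H < d)
    (hρ : eta H d ≤ ρ) (hnum : 0 ≤ d + 2 * H * exp (-ρ)) : JF H d ρ ≤ arccos (2 * H) := by
  have hH' : 4 * H ^ 2 < 1 := by nlinarith
  have hd' : d + 2 * H ≠ 0 := by linarith
  have hη : 0 < eta H d := eta_pos hH' hd'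
  have hint := intervalIntegrable_remainderDensity hH0 hH hd hρ hnum
  calc JF H d ρ = ∫ r in eta H d..ρ, remainderDensity H d r := JF_eq_integral_remainderDensity
    _ ≤ arccos (profileSin H d ρ) - arccos (profileSin H d (eta H d)) :=
        intervalIntegral.integral_le_sub_of_hasDeriv_right_of_le hρ
          (continuousOn_arccos_profileSin.mono fun r hr ↦ hη.trans_le hr.1)
          (fun r hr ↦ (hasDerivAt_arccos_profileSin hH' hd' hr.1).hasDerivWithinAt)
          ((intervalIntegrable_iff_integrableOn_Icc_of_le hρ).1 hint)
          (fun r hr ↦ remainderDensity_le_deriv hH0 hd (hη.trans hr.1))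
    _ ≤ arccos (profileSin H d ρ) := sub_le_self _ (Real.arccos_nonneg _)
    _ ≤ arccos (2 * H) :=
        Real.arccos_le_arccos ((two_mul_le_profileSin_iff (hη.trans_le hρ)).2 hnum)

theorem numerator_eta_pos (hH0 : 0 ≤ H) (hH : H < 1 / 2) (hd : -2 * H < d) :
    0 < d + 2 * H * exp (-eta H d) := by
  have hη : 0 < sinh (eta H d) := Real.sinh_pos_iff.2 (eta_pos (by nlinarith) (by linarith))
  calc 0 < (1 - 2 * H) * sinh (eta H d) := mul_pos (by linarith) hη
    _ = d + 2 * H * exp (-eta H d) := by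
      rw [← Real.cosh_sub_sinh]
      linear_combination sinh_eta hH0 hH hd

theorem exists_numerator_eq_zero (hH0 : 0 ≤ H) (hH : H < 1 / 2) (hd : -2 * H < d)
    (hρ : eta H d ≤ ρ) (hnum : d + 2 * H * exp (-ρ) < 0) :
    ∃ σ, eta H d < σ ∧ σ ≤ ρ ∧ d + 2 * H * exp (-σ) = 0 := by
  have hη := numerator_eta_pos hH0 hH hd
  have hcont : ContinuousOn (fun r ↦ d + 2 * H * exp (-r)) (Icc (eta H d) ρ) := by fun_prop
  obtain ⟨σ, hσ, hσ0⟩ := intermediate_value_Icc' hρ hcont ⟨hnum.le, hη.le⟩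
  refine ⟨σ, hσ.1.lt_of_ne ?_, hσ.2, hσ0⟩
  rintro rfl
  exact hη.ne' hσ0

theorem integral_remainderDensity_nonpos {σ : ℝ} (hH : 0 ≤ H) (hσρ : σ ≤ ρ)
    (hσ : d + 2 * H * exp (-σ) ≤ 0) : ∫ r in σ..ρ, remainderDensity H d r ≤ 0 := by
  rw [intervalIntegral.integral_of_le hσρ]
  refine setIntegral_nonpos measurableSet_Ioc fun r hr ↦ ?_
  exact div_nonpos_of_nonpos_of_nonneg
    ((antitone_add_two_mul_exp_neg hH d hr.1.le).trans hσ) (Real.sqrt_nonneg _)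

theorem JF_le_arccos_two_mul (hH0 : 0 ≤ H) (hH : H < 1 / 2) (hd : -2 * H < d)
    (hρ : eta H d ≤ ρ) : JF H d ρ ≤ arccos (2 * H) := by
  rcases le_or_gt 0 (d + 2 * H * exp (-ρ)) with hnum | hnum
  · exact JF_le_arccos_of_numerator_nonneg hH0 hH hd hρ hnum
  obtain ⟨σ, hησ, hσρ, hσ⟩ := exists_numerator_eq_zero hH0 hH hd hρ hnum
  have hleft := intervalIntegrable_remainderDensity hH0 hH hd hησ.le hσ.ge
  have hright : IntervalIntegrable (remainderDensity H d) volume σ ρ := by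
    refine ((continuousOn_remainderDensity (by nlinarith) (by linarith)).mono ?_).intervalIntegrable
    rw [Set.uIcc_of_le hσρ]
    exact fun r hr ↦ hησ.trans_le hr.1
  calc JF H d ρ = JF H d σ + ∫ r in σ..ρ, remainderDensity H d r := by
        rw [JF_eq_integral_remainderDensity, JF_eq_integral_remainderDensity,
          intervalIntegral.integral_add_adjacent_intervals hleft hright]
    _ ≤ JF H d σ := add_le_of_nonpos_right (integral_remainderDensity_nonpos hH0 hσρ hσ.le)
    _ ≤ arccos (2 * H) := JF_le_arccos_of_numerator_nonneg hH0 hH hd hησ.le hσ.ge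

end Catenoid

theorem stmt_14_general {H d ρ : ℝ} (hH0 : 0 ≤ H) (hH : H < 1 / 2) (hd : -2 * H < d)
    (hρ : eta H d ≤ ρ) : JF H d ρ < 2 * Real.pi * √(1 - 2 * H) :=
  (JF_le_arccos_two_mul hH0 hH hd hρ).trans_lt (arccos_lt_two_mul_pi_mul_sqrt (by linarith))

theorem stmt_14 (H : ℝ) (hH0 : 0 < H) (hH : H < 1 / 2) :
    ∀ d : ℝ, 2 < d → ∀ ρ : ℝ, eta H d < ρ →
      JF H d ρ < 2 * Real.pi * Real.sqrt (1 - 2 * H) :=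
  fun _ hd _ hρ ↦ stmt_14_general hH0.le hH (by linarith) hρ.le
end
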